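/- arXiv:2510.00983 — 3 statements merged into one kernel-verified Lean document; each statement's English description precedes it below -/
import Mathlib

section
/- Let x: ℝ → ℝ^{n+1} and v: ℝ → ℝ^{n+1} be differentiable maps with ‖x(t)‖ = 1 and ⟨v(t), x(t)⟩ = 0 for all t, let κ: ℝ → ℝ be differentiable, and suppose u(t) := κ(t)·v(t) ≠ 0 for all t. Then the curve f(t) := exp_{x(t)}(u(t)) is differentiable and for every t, f'(t) = D₁(w(t)) + D₂(x'(t)), where w := κ'·v + κ·(v' + ⟨v, x'⟩·x), D₁(w) := (⟨u,w⟩/‖u‖²)·u·cos‖u‖ + (sin‖u‖/‖u‖)·(w − (⟨u,w⟩/‖u‖²)·u − ⟨u,w⟩·x), and D₂(ẋ) := ẋ·cos‖u‖ − (sin‖u‖/‖u‖)·⟨u,ẋ⟩·x. (This is the continuous-time Riemannian consistency decomposition ḟ = d(exp_x)_u(κ̇v + κ∇_ẋv) + d(exp u)_x(ẋ) instantiated on the sphere Sⁿ, where ∇_ẋv = v̇ + ⟨v,ẋ⟩x is the spherical covariant derivative.) -/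
open scoped RealInnerProductSpace

/-- On the sphere `Sⁿ ⊆ ℝ^{n+1}`, for a curve `x` with `‖x t‖ = 1`, a tangent
field `v` with `⟨v t, x t⟩ = 0`, a scheduler `κ`, and `u t := κ t • v t ≠ 0`, the curve
`f t := exp_{x t}(u t) = cos‖u‖ • x + (sin‖u‖/‖u‖) • u` is differentiable with
`f' t = d(exp_x)_u(w) + d(exp u)_x(x')` where `w = κ'•v + κ•(v' + ⟨v,x'⟩•x)` is
`κ̇v + κ∇_ẋv` (spherical covariant derivative). -/
theorem riemannian_consistency_decomposition_sphere {n : ℕ}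
    (x v x' v' : ℝ → EuclideanSpace ℝ (Fin (n + 1)))
    (κ κ' : ℝ → ℝ)
    (hx : ∀ t, HasDerivAt x (x' t) t)
    (hv : ∀ t, HasDerivAt v (v' t) t)
    (hκ : ∀ t, HasDerivAt κ (κ' t) t)
    (hxnorm : ∀ t, ‖x t‖ = 1)
    (hvx : ∀ t, ⟪v t, x t⟫ = 0)
    (hu : ∀ t, κ t • v t ≠ 0) :
    ∀ t : ℝ,
      HasDerivAt
        (fun s => Real.cos ‖κ s • v s‖ • x s
          + (Real.sin ‖κ s • v s‖ / ‖κ s • v s‖) • (κ s • v s))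
        -- D₁(w t):
        (((⟪κ t • v t, κ' t • v t + κ t • (v' t + ⟪v t, x' t⟫ • x t)⟫ / ‖κ t • v t‖ ^ 2)
              * Real.cos ‖κ t • v t‖) • (κ t • v t)
          + (Real.sin ‖κ t • v t‖ / ‖κ t • v t‖) •
              ((κ' t • v t + κ t • (v' t + ⟪v t, x' t⟫ • x t))
                - (⟪κ t • v t, κ' t • v t + κ t • (v' t + ⟪v t, x' t⟫ • x t)⟫
                    / ‖κ t • v t‖ ^ 2) • (κ t • v t)
                - ⟪κ t • v t, κ' t • v t + κ t • (v' t + ⟪v t, x' t⟫ • x t)⟫ • x t)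
        -- + D₂(x' t):
          + (Real.cos ‖κ t • v t‖ • x' t
              - ((Real.sin ‖κ t • v t‖ / ‖κ t • v t‖) * ⟪κ t • v t, x' t⟫) • x t)) t := by
  intro t
  have hU : HasDerivAt (fun s => κ s • v s) (κ t • v' t + κ' t • v t) t := (hκ t).smul (hv t)
  have hw : κ' t • v t + κ t • (v' t + ⟪v t, x' t⟫ • x t)
      = (κ t • v' t + κ' t • v t) + ⟪κ t • v t, x' t⟫ • x t := by
    rw [real_inner_smul_left]
    module
  have hux : ⟪κ t • v t, x t⟫ = 0 := by rw [real_inner_smul_left, hvx, mul_zero]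
  rw [hw]
  have hne := hu t
  generalize κ t • v' t + κ' t • v t = u' at *
  have key : ∀ u : ℝ → EuclideanSpace ℝ (Fin (n + 1)), HasDerivAt u u' t → u t ≠ 0 →
      HasDerivAt (fun s => Real.cos ‖u s‖ • x s + (Real.sin ‖u s‖ / ‖u s‖) • u s)
      ((Real.cos ‖u t‖ • x' t + (-Real.sin ‖u t‖ * (⟪u t, u'⟫ / ‖u t‖)) • x t)
        + ((Real.sin ‖u t‖ / ‖u t‖) • u' +
          ((Real.cos ‖u t‖ * (⟪u t, u'⟫ / ‖u t‖) * ‖u t‖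
            - Real.sin ‖u t‖ * (⟪u t, u'⟫ / ‖u t‖)) / ‖u t‖ ^ 2) • u t)) t := by
    intro u h h0
    have hn0 : ‖u t‖ ≠ 0 := norm_ne_zero_iff.mpr h0
    have hr : HasDerivAt (fun s => ‖u s‖) (⟪u t, u'⟫ / ‖u t‖) t := by
      have h1 := (h.norm_sq).sqrt (by positivity)
      have e : (fun s => √(‖u s‖ ^ 2)) = fun s => ‖u s‖ := by
        funext s
        exact Real.sqrt_sq (norm_nonneg _)
      rw [e, Real.sqrt_sq (norm_nonneg _)] at h1
      convert h1 using 1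
      field_simp
    exact (hr.cos.smul (hx t)).add ((hr.sin.div hr hn0).smul h)
  have hk := key (fun s => κ s • v s) hU hne
  have hn0 : ‖κ t • v t‖ ≠ 0 := norm_ne_zero_iff.mpr hne
  refine hk.congr_deriv ?_
  have hin : ⟪κ t • v t, u' + ⟪κ t • v t, x' t⟫ • x t⟫ = ⟪κ t • v t, u'⟫ := by
    rw [inner_add_right, real_inner_smul_right, hux, mul_zero, add_zero]
  rw [hin]
  beta_reduce
  generalize ⟪κ t • v t, u'⟫ = a at *
  generalize ⟪κ t • v t, x' t⟫ = b at *
  generalize ‖κ t • v t‖ = r at *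
  generalize κ t • v t = u at *
  match_scalars <;> field_simp <;> ring
end

section
/- Let x₀, x₁ ∈ ℝ^{n+1} be unit vectors with ⟨x₀, x₁⟩ ∈ (−1, 1), and let κ: ℝ → (0, 1] be differentiable. Define the geodesic interpolation x_t := exp_{x₁}(κ(t)·log_{x₁}(x₀)). Then for every t with κ(t) < 1, x_t is a unit vector with ⟨x_t, x₁⟩ ∈ (−1,1), the curve t ↦ x_t is differentiable, and its velocity satisfies (d/dt)x_t = −(κ'(t)/κ(t))·log_{x_t}(x₁); in particular ‖(d/dt)x_t‖ = |κ'(t)|·arccos⟨x₀, x₁⟩. -/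
open scoped RealInnerProductSpace

/-- The spherical exponential map `exp_x(u) = x·cos‖u‖ + (u/‖u‖)·sin‖u‖`. -/
noncomputable def sphereExp {n : ℕ} (x u : EuclideanSpace ℝ (Fin (n + 1))) :
    EuclideanSpace ℝ (Fin (n + 1)) :=
  Real.cos ‖u‖ • x + (Real.sin ‖u‖ / ‖u‖) • u

/-- The spherical logarithm map `log_x(y) = (arccos c/√(1−c²))·(y − c·x)`, `c = ⟨x,y⟩`. -/
noncomputable def sphereLog {n : ℕ} (x y : EuclideanSpace ℝ (Fin (n + 1))) :
    EuclideanSpace ℝ (Fin (n + 1)) :=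
  (Real.arccos ⟪x, y⟫ / Real.sqrt (1 - ⟪x, y⟫ ^ 2)) • (y - ⟪x, y⟫ • x)

/-- Geodesic interpolation (conditional flow of Riemannian flow matching
on the sphere). For unit vectors `x₀, x₁` with `⟨x₀,x₁⟩ ∈ (−1,1)` and a differentiable
scheduler `κ : ℝ → (0,1]`, the curve `x_t := exp_{x₁}(κ t • log_{x₁} x₀)` satisfies,
at every `t` with `κ t < 1`: `x_t` is a unit vector with `⟨x_t, x₁⟩ ∈ (−1,1)`, the
curve is differentiable at `t` with velocity `−(κ' t/κ t) • log_{x_t}(x₁)`, and the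
speed is `|κ' t| · arccos⟨x₀,x₁⟩`. -/
theorem sphere_geodesic_interpolation_velocity {n : ℕ}
    (x₀ x₁ : EuclideanSpace ℝ (Fin (n + 1)))
    (h₀ : ‖x₀‖ = 1) (h₁ : ‖x₁‖ = 1) (hc : ⟪x₀, x₁⟫ ∈ Set.Ioo (-1 : ℝ) 1)
    (κ κ' : ℝ → ℝ)
    (hκ : ∀ t, HasDerivAt κ (κ' t) t)
    (hκr : ∀ t, κ t ∈ Set.Ioc (0 : ℝ) 1) :
    ∀ t : ℝ, κ t < 1 →
      ‖sphereExp x₁ (κ t • sphereLog x₁ x₀)‖ = 1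
      ∧ ⟪sphereExp x₁ (κ t • sphereLog x₁ x₀), x₁⟫ ∈ Set.Ioo (-1 : ℝ) 1
      ∧ HasDerivAt (fun s => sphereExp x₁ (κ s • sphereLog x₁ x₀))
          ((-(κ' t / κ t)) • sphereLog (sphereExp x₁ (κ t • sphereLog x₁ x₀)) x₁) t
      ∧ ‖(-(κ' t / κ t)) • sphereLog (sphereExp x₁ (κ t • sphereLog x₁ x₀)) x₁‖
          = |κ' t| * Real.arccos ⟪x₀, x₁⟫ := by
  intro t ht
  obtain ⟨hc1, hc2⟩ := hc
  obtain ⟨θ, hθ⟩ : ∃ θ, θ = Real.arccos ⟪x₀, x₁⟫ := ⟨_, rfl⟩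
  have hcos : Real.cos θ = ⟪x₀, x₁⟫ := by rw [hθ]; exact Real.cos_arccos hc1.le hc2.le
  have hθ0 : 0 < θ := by rw [hθ]; exact Real.arccos_pos.2 hc2
  have hθπ : θ < Real.pi := by
    refine lt_of_le_of_ne (by rw [hθ]; exact Real.arccos_le_pi _) ?_
    intro h
    rw [h, Real.cos_pi] at hcos
    linarith
  have hsθ : 0 < Real.sin θ := Real.sin_pos_of_pos_of_lt_pi hθ0 hθπ
  have hsq : ∀ a : ℝ, 0 < Real.sin a → Real.sqrt (1 - Real.cos a ^ 2) = Real.sin a := by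
    intro a ha
    rw [← Real.sin_sq, Real.sqrt_sq ha.le]
  have h11 : ⟪x₁, x₁⟫ = (1 : ℝ) := by rw [real_inner_self_eq_norm_sq, h₁]; norm_num
  have h00 : ⟪x₀, x₀⟫ = (1 : ℝ) := by rw [real_inner_self_eq_norm_sq, h₀]; norm_num
  have hsc := Real.sin_sq_add_cos_sq θ
  obtain ⟨e, he⟩ : ∃ e, e = (Real.sin θ)⁻¹ • (x₀ - Real.cos θ • x₁) := ⟨_, rfl⟩
  have h1e : ⟪x₁, e⟫ = (0 : ℝ) := by
    rw [he, inner_smul_right, inner_sub_right, inner_smul_right, h11, real_inner_comm, hcos]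
    ring
  have he1 : ⟪e, x₁⟫ = (0 : ℝ) := by rw [real_inner_comm, h1e]
  have hee : ⟪e, e⟫ = (1 : ℝ) := by
    rw [he]
    simp only [inner_smul_right, inner_smul_left, inner_sub_right, inner_sub_left, h11, h00,
      real_inner_comm x₀ x₁, ← hcos, RCLike.conj_to_real]
    field_simp
    linarith
  have hlog : sphereLog x₁ x₀ = θ • e := by
    unfold sphereLog
    rw [real_inner_comm, ← hθ, ← hcos, hsq θ hsθ, he, smul_smul, div_eq_mul_inv]
  have hne : ‖e‖ = 1 := by
    have := real_inner_self_eq_norm_sq e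
    rw [hee] at this
    nlinarith [norm_nonneg e]
  have hexp : ∀ s, sphereExp x₁ (κ s • sphereLog x₁ x₀)
      = Real.cos (κ s * θ) • x₁ + Real.sin (κ s * θ) • e := by
    intro s
    have hp : 0 < κ s * θ := mul_pos (hκr s).1 hθ0
    have hn : ‖(κ s * θ) • e‖ = κ s * θ := by
      rw [norm_smul, hne, mul_one, Real.norm_of_nonneg hp.le]
    unfold sphereExp
    rw [hlog, smul_smul, hn, smul_smul, div_mul_cancel₀ _ hp.ne']
  have hk := (hκr t).1
  obtain ⟨φ, hφ⟩ : ∃ φ, φ = κ t * θ := ⟨_, rfl⟩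
  have hφ0 : 0 < φ := by rw [hφ]; exact mul_pos hk hθ0
  have hφπ : φ < Real.pi := by rw [hφ]; nlinarith
  have hsφ : 0 < Real.sin φ := Real.sin_pos_of_pos_of_lt_pi hφ0 hφπ
  have hscφ := Real.sin_sq_add_cos_sq φ
  have hin : ⟪Real.cos φ • x₁ + Real.sin φ • e, x₁⟫ = Real.cos φ := by
    simp [inner_add_left, inner_smul_left, h11, he1, h₁]
  have hunit : ∀ a b : ℝ, ‖a • x₁ + b • e‖ ^ 2 = a ^ 2 + b ^ 2 := by
    intro a b
    rw [← real_inner_self_eq_norm_sq]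
    simp only [inner_add_left, inner_add_right, inner_smul_left, inner_smul_right, h11, he1, h1e,
      hee, RCLike.conj_to_real]
    ring
  have hunit1 : ∀ a b : ℝ, a ^ 2 + b ^ 2 = 1 → ‖a • x₁ + b • e‖ = 1 := by
    intro a b hab
    have := hunit a b
    rw [hab] at this
    nlinarith [norm_nonneg (a • x₁ + b • e)]
  have hlog2 : sphereLog (Real.cos φ • x₁ + Real.sin φ • e) x₁
      = φ • (Real.sin φ • x₁ + (-Real.cos φ) • e) := by
    unfold sphereLog
    rw [hin, hsq φ hsφ, Real.arccos_cos hφ0.le hφπ.le]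
    have : x₁ - Real.cos φ • (Real.cos φ • x₁ + Real.sin φ • e)
        = Real.sin φ • (Real.sin φ • x₁ + (-Real.cos φ) • e) := by
      have h2 : x₁ = (Real.sin φ ^ 2 + Real.cos φ ^ 2) • x₁ := by rw [hscφ, one_smul]
      nth_rewrite 1 [h2]
      module
    rw [this, smul_smul, div_mul_cancel₀ _ hsφ.ne']
  have hvel : (-(κ' t / κ t)) • sphereLog (sphereExp x₁ (κ t • sphereLog x₁ x₀)) x₁
      = (-(κ' t * θ)) • (Real.sin φ • x₁ + (-Real.cos φ) • e) := by
    rw [hexp, ← hφ, hlog2, smul_smul]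
    congr 1
    rw [hφ]
    field_simp
  refine ⟨?_, ?_, ?_, ?_⟩
  · rw [hexp, ← hφ]
    exact hunit1 _ _ (by linarith)
  · rw [hexp, ← hφ, hin]
    constructor <;> nlinarith
  · rw [hvel, funext hexp]
    have hd : HasDerivAt (fun s => κ s * θ) (κ' t * θ) t := (hκ t).mul_const θ
    have := (hd.cos.smul_const x₁).add (hd.sin.smul_const e)
    rw [← hφ] at this
    refine this.congr_deriv ?_
    module
  · rw [hvel, norm_smul, hunit1 _ _ (by linarith [neg_sq (Real.cos φ)]), mul_one, ← hθ,
      Real.norm_eq_abs, abs_neg, abs_mul, abs_of_pos hθ0]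
end

section
/- For every nonzero u ∈ ℝ³ with r := ‖u‖, the left Jacobian series of SO(3) converges and has the closed form J_L(u) = Σ_{n=0}^∞ û^n/(n+1)! = I + ((1 − cos(r))/r²)·û + ((r − sin(r))/r³)·û². -/
open Matrix

/-- The hat matrix of `u ∈ ℝ³`: the skew-symmetric matrix with `hat u *ᵥ v = u ×₃ v`. -/
def hat (u : Fin 3 → ℝ) : Matrix (Fin 3) (Fin 3) ℝ :=
  !![0, -u 2, u 1; u 2, 0, -u 0; -u 1, u 0, 0]

lemma hat_cube (u : Fin 3 → ℝ) (r : ℝ) (h : r ^ 2 = u 0 ^ 2 + u 1 ^ 2 + u 2 ^ 2) :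
    hat u ^ 3 = (-r ^ 2) • hat u := by
  rw [h]
  ext i j
  fin_cases i <;> fin_cases j <;>
    simp [hat, pow_succ, Matrix.mul_apply, Fin.sum_univ_three] <;> ring

lemma hat_odd (u : Fin 3 → ℝ) (r : ℝ) (h : r ^ 2 = u 0 ^ 2 + u 1 ^ 2 + u 2 ^ 2) (m : ℕ) :
    hat u ^ (2 * m + 1) = ((-1) ^ m * r ^ (2 * m)) • hat u := by
  induction m with
  | zero => simp
  | succ m ih =>
    rw [show 2 * (m + 1) + 1 = (2 * m + 1) + 2 by ring, pow_add, ih, smul_mul_assoc,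
      ← pow_succ', hat_cube u r h, smul_smul]
    congr 1
    ring

lemma hasSum_a (r : ℝ) (hr : r ≠ 0) :
    HasSum (fun m : ℕ => ((Nat.factorial (2 * m + 2) : ℝ))⁻¹ * ((-1) ^ m * r ^ (2 * m)))
      ((1 - Real.cos r) / r ^ 2) := by
  have h := ((hasSum_nat_add_iff' 1).mpr (Real.hasSum_cos r)).mul_left (-(r ^ 2)⁻¹)
  refine (congrArg₂ (fun f a => HasSum (f : ℕ → ℝ) (a : ℝ)) (?_ : _ = _) (?_ : _ = _)).mp h
  · ext m
    symm
    rw [show 2 * (m + 1) = 2 * m + 2 by ring]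
    field_simp
    ring
  · symm
    simp
    field_simp
    ring

lemma hasSum_b (r : ℝ) (hr : r ≠ 0) :
    HasSum (fun m : ℕ => ((Nat.factorial (2 * m + 3) : ℝ))⁻¹ * ((-1) ^ m * r ^ (2 * m)))
      ((r - Real.sin r) / r ^ 3) := by
  have h := ((hasSum_nat_add_iff' 1).mpr (Real.hasSum_sin r)).mul_left (-(r ^ 3)⁻¹)
  refine (congrArg₂ (fun f a => HasSum (f : ℕ → ℝ) (a : ℝ)) (?_ : _ = _) (?_ : _ = _)).mp h
  · ext m
    symm
    rw [show 2 * (m + 1) + 1 = 2 * m + 3 by ring]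
    field_simp
    ring
  · symm
    simp
    field_simp
    ring

/-- The left Jacobian series of SO(3), `J_L(u) = Σ_{n≥0} ûⁿ/(n+1)!`,
converges, with closed form `I + ((1 − cos r)/r²)·û + ((r − sin r)/r³)·û²` for
nonzero `u` with Euclidean norm `r`. -/
theorem so3_left_jacobian_closed_form (u : Fin 3 → ℝ) (hu : u ≠ 0) (r : ℝ)
    (hr : r = Real.sqrt (u 0 ^ 2 + u 1 ^ 2 + u 2 ^ 2)) :
    HasSum (fun k : ℕ => ((Nat.factorial (k + 1) : ℝ))⁻¹ • hat u ^ k)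
      (1 + ((1 - Real.cos r) / r ^ 2) • hat u + ((r - Real.sin r) / r ^ 3) • hat u ^ 2) := by
  have h2 : r ^ 2 = u 0 ^ 2 + u 1 ^ 2 + u 2 ^ 2 := by
    rw [hr, Real.sq_sqrt (by positivity)]
  have hr0 : r ≠ 0 := by
    rintro rfl
    apply hu
    ext i
    fin_cases i <;> simp <;>
      nlinarith [sq_nonneg (u 0), sq_nonneg (u 1), sq_nonneg (u 2)]
  have ha := (hasSum_a r hr0).smul_const (hat u)
  have hb := (hasSum_b r hr0).smul_const (hat u ^ 2)
  rw [← hasSum_nat_add_iff' 1]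
  have key : HasSum (fun k : ℕ => ((Nat.factorial (k + 1 + 1) : ℝ))⁻¹ • hat u ^ (k + 1))
      (((1 - Real.cos r) / r ^ 2) • hat u + ((r - Real.sin r) / r ^ 3) • hat u ^ 2) := by
    refine HasSum.even_add_odd ?_ ?_
    · convert ha using 2 with m
      rw [hat_odd u r h2, smul_smul]
    · convert hb using 2 with m
      rw [pow_succ, hat_odd u r h2, smul_mul_assoc, smul_smul, ← pow_two]
  refine (congrArg (fun a => HasSum (fun k : ℕ =>
    ((Nat.factorial (k + 1 + 1) : ℝ))⁻¹ • hat u ^ (k + 1)) a) (?_ : _ = _)).mp key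
  simp
  abel
end
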